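/- Let B be a commutative ring, let P_1,…,P_m be distinct maximal ideals of B, let A = B[y], r ≥ 3, and let b = b(y) = (b_1,…,b_{−1})^t ∈ IUm_{2r}(A) be a column such that b_{−2} is a monic polynomial in y. Then there exists a column b^{(1)} ∈ EO(2r,A)^{≤ ⌈(r−1)/2⌉ + 2} · b such that b^{(1)}_{−2} is monic in y and the intersection (⟨b^{(1)}_1,…,b^{(1)}_{r−1}⟩ ∩ B) is not contained in the union P_1 ∪ … ∪ P_m, i.e. (⟨b^{(1)}_1,…,b^{(1)}_{r−1}⟩ ∩ B) \ (P_1 ∪ … ∪ P_m) ≠ ∅. -/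

import Mathlib

open Matrix

section EvenDefs

variable {R : Type*} [CommRing R]

/-- In the basis `e_1,…,e_r,e_{-r},…,e_{-1}` of `R^{2r}` (0-indexed by `Fin (2*r)`),
the position of `e_{-i}` given the position of `e_i` (and vice versa). -/
def negE (r : ℕ) (i : Fin (2 * r)) : Fin (2 * r) := ⟨2 * r - 1 - i.val, by omega⟩

/-- The split quadratic form `q(x) = ∑_{i=1}^r x_i x_{-i}` on `R^{2r}`. -/
def quadE (r : ℕ) (x : Fin (2 * r) → R) : R :=
  ∑ i : Fin r, x ⟨i.val, by omega⟩ * x ⟨2 * r - 1 - i.val, by omega⟩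

/-- The even split orthogonal group `O(2r,R)`, as a set of matrices. -/
def OE (r : ℕ) (R : Type*) [CommRing R] : Set (Matrix (Fin (2 * r)) (Fin (2 * r)) R) :=
  {g | IsUnit g ∧ ∀ x : Fin (2 * r) → R, quadE r (g.mulVec x) = quadE r x}

/-- The elementary orthogonal transvection `T_{i,j}(ξ) = e + ξ e_{i,j} - ξ e_{-j,-i}`. -/
def TE (r : ℕ) (i j : Fin (2 * r)) (ξ : R) : Matrix (Fin (2 * r)) (Fin (2 * r)) R :=
  1 + ξ • Matrix.single i j 1 - ξ • Matrix.single (negE r j) (negE r i) 1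

/-- Being an elementary orthogonal transvection (even case): `T_{i,j}(ξ)` with `i ≠ ±j`. -/
def IsElemE (r : ℕ) (g : Matrix (Fin (2 * r)) (Fin (2 * r)) R) : Prop :=
  ∃ i j : Fin (2 * r), ∃ ξ : R, i ≠ j ∧ i ≠ negE r j ∧ g = TE r i j ξ

/-- `EO(2r,R)^{≤N}` : products of at most `N` elementary orthogonal transvections. -/
def EOE (r N : ℕ) (R : Type*) [CommRing R] : Set (Matrix (Fin (2 * r)) (Fin (2 * r)) R) :=
  {g | ∃ L : List (Matrix (Fin (2 * r)) (Fin (2 * r)) R),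
    L.length ≤ N ∧ (∀ m ∈ L, IsElemE r m) ∧ g = L.prod}

/-- `IUm_{2r}(R)` : isotropic unimodular columns. -/
def IUmE (r : ℕ) (R : Type*) [CommRing R] : Set (Fin (2 * r) → R) :=
  {b | Ideal.span (Set.range b) = ⊤ ∧ quadE r b = 0}

end EvenDefs

/-!
The column `b` is followed modulo the finitely many maximal ideals of `A = B[y]` that matter. If `f`
is monic then `A / (f)` is finite over `B`, so only finitely many maximal ideals of `A` contain `f`
and lie over one of the `P_i`; and by integrality together with prime avoidance, an ideal containing
`f` and contained in none of them contains a constant outside all the `P_i`.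

The transvection `T_{i,j}(ξ)` adds multiples of `b_j` and `b_{-i}` to `b_i` and `b_{-j}`. Choosing
`ξ` by the Chinese remainder theorem, congruent to `1` modulo the maximal ideals at which the other
coordinates under consideration all vanish and to `0` modulo the remaining ones, keeps `b`
unimodular at every maximal ideal in question after discarding the coordinates `j` and `-i`. A first
transvection `T_{1,-2}(ξ)` makes `b_1` monic, which fixes the finite set of maximal ideals; each
further one discards two coordinates and the last one a single coordinate, until only
`b_1, …, b_{r-1}` are left.
-/

section MaximalIdeals

variable {B A : Type*} [CommRing B] [CommRing A] [Algebra B A]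

/-- The maximal ideals of the `B`-algebra `A` that contain `J` and contract to a member of `T`. -/
def maximalsOver (T : Set (Ideal B)) (J : Ideal A) : Set (Ideal A) :=
  {M | M.IsMaximal ∧ J ≤ M ∧ M.under B ∈ T}

theorem finite_maximalsOver {T : Set (Ideal B)} (hT : T.Finite) (J : Ideal A)
    [Module.Finite B (A ⧸ J)] : (maximalsOver T J).Finite := by
  refine (hT.biUnion fun p _ ↦ (Algebra.QuasiFinite.finite_primesOver (S := A ⧸ J) p).image
    (Ideal.comap (Ideal.Quotient.mk J))).subset ?_
  rintro M ⟨hM, hJM, hMT⟩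
  have hcomap : (M.map (Ideal.Quotient.mk J)).comap (Ideal.Quotient.mk J) = M :=
    Ideal.comap_map_mk hJM
  refine Set.mem_biUnion hMT ⟨M.map (Ideal.Quotient.mk J), ⟨?_, ⟨?_⟩⟩, hcomap⟩
  · exact Ideal.isPrime_map_quotientMk_of_isPrime hJM
  · exact (congrArg (Ideal.under B) hcomap).symm

theorem exists_mem_maximalsOver_of_under_le {T : Set (Ideal B)} {J : Ideal A}
    [Algebra.IsIntegral B (A ⧸ J)] {p : Ideal B} [hp : p.IsMaximal] (hpT : p ∈ T)
    (hJp : J.under B ≤ p) : ∃ M, M ∈ maximalsOver T J := by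
  have hker : (⊥ : Ideal (A ⧸ J)).comap (algebraMap B (A ⧸ J)) = J.under B :=
    Ideal.ext fun _ ↦ Ideal.Quotient.eq_zero_iff_mem
  obtain ⟨Q, -, hQ, hQp⟩ := Ideal.exists_ideal_over_prime_of_isIntegral p ⊥ (hker.trans_le hJp)
  have hQmax : Q.IsMaximal :=
    Ideal.isMaximal_of_isIntegral_of_isMaximal_comap (R := B) Q (hQp.symm ▸ hp)
  refine ⟨Q.comap (Ideal.Quotient.mk J),
    Ideal.comap_isMaximal_of_surjective _ Ideal.Quotient.mk_surjective, fun x hx ↦ ?_, ?_⟩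
  · rw [Ideal.mem_comap, Ideal.Quotient.eq_zero_iff_mem.2 hx]
    exact Q.zero_mem
  · rwa [← hQp] at hpT

theorem exists_algebraMap_mem_forall_notMem {T : Set (Ideal B)} (hT : T.Finite)
    (hmax : ∀ p ∈ T, p.IsMaximal) {I J : Ideal A} [Algebra.IsIntegral B (A ⧸ I)] (hIJ : I ≤ J)
    (hJ : ∀ M ∈ maximalsOver T I, ¬ J ≤ M) : ∃ x : B, algebraMap B A x ∈ J ∧ ∀ p ∈ T, x ∉ p := by
  by_contra! hcover
  obtain ⟨p, hpT, hJp⟩ :=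
    (Ideal.subset_union_prime_finite (f := id) (I := J.under B) hT ⊥ ⊥
      fun p hp _ _ ↦ (hmax p hp).isPrime).1 fun x hx ↦ by simpa using hcover x hx
  have := hmax p hpT
  have : Algebra.IsIntegral B (A ⧸ J) :=
    .of_surjective (Ideal.Quotient.factorₐ B hIJ) (Ideal.Quotient.factor_surjective hIJ)
  obtain ⟨M, hM, hJM, hMT⟩ := exists_mem_maximalsOver_of_under_le hpT hJp
  exact hJ M ⟨hM, hIJ.trans hJM, hMT⟩ hJM

theorem exists_forall_sub_one_mem_or_mem {S : Set (Ideal A)} (hS : S.Finite)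
    (hmax : ∀ M ∈ S, M.IsMaximal) (q : Ideal A → Prop) :
    ∃ ξ : A, ∀ M ∈ S, (q M → ξ - 1 ∈ M) ∧ (¬ q M → ξ ∈ M) := by
  classical
  have := hS.to_subtype
  obtain ⟨ξ, hξ⟩ := Ideal.exists_forall_sub_mem_ideal (I := ((↑) : S → Ideal A))
    (fun M N hMN ↦
      have := hmax M M.2
      have := hmax N N.2
      Ideal.isCoprime_of_isMaximal (Subtype.coe_ne_coe.2 hMN))
    (fun M ↦ if q M then 1 else 0)
  exact ⟨ξ, fun M hM ↦ ⟨fun h ↦ by simpa [h] using hξ ⟨M, hM⟩,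
    fun h ↦ by simpa [h] using hξ ⟨M, hM⟩⟩⟩

end MaximalIdeals

theorem exists_monic_add_mul_X_pow {R : Type*} [CommRing R] (p : Polynomial R)
    {q : Polynomial R} (hq : q.Monic) : ∃ N : ℕ, (p + q * Polynomial.X ^ N).Monic := by
  nontriviality R
  refine ⟨p.natDegree + 1, (hq.mul (Polynomial.monic_X_pow _)).add_of_right
    (Polynomial.degree_lt_degree ?_)⟩
  rw [Polynomial.natDegree_mul_X_pow _ hq.ne_zero]
  omega

section Transvections

variable {A : Type*} [CommRing A] {r : ℕ} {i j k : Fin (2 * r)}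

theorem val_negE (i : Fin (2 * r)) : (negE r i : ℕ) = 2 * r - 1 - i := rfl

theorem negE_involutive (r : ℕ) : Function.Involutive (negE r) := fun i ↦ by
  simp only [Fin.ext_iff, val_negE]
  omega

theorem ne_negE_self (i : Fin (2 * r)) : i ≠ negE r i := by
  simp only [ne_eq, Fin.ext_iff, val_negE]
  omega

theorem TE_mulVec_apply (i j : Fin (2 * r)) (ξ : A) (v : Fin (2 * r) → A) (k : Fin (2 * r)) :
    (TE r i j ξ *ᵥ v) k =
      v k + (if k = i then ξ * v j else 0)
        - (if k = negE r j then ξ * v (negE r i) else 0) := by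
  simp [TE, Matrix.sub_mulVec, Matrix.add_mulVec, Matrix.single_mulVec,
    Function.update_apply]

theorem TE_mulVec_apply_of_ne (hki : k ≠ i) (hkj : k ≠ negE r j) (ξ : A)
    (v : Fin (2 * r) → A) : (TE r i j ξ *ᵥ v) k = v k := by
  simp [TE_mulVec_apply, hki, hkj]

theorem TE_mulVec_apply_left (hij : i ≠ negE r j) (ξ : A) (v : Fin (2 * r) → A) :
    (TE r i j ξ *ᵥ v) i = v i + ξ * v j := by
  simp [TE_mulVec_apply, hij]

theorem TE_mulVec_apply_negE_right (hij : i ≠ negE r j) (ξ : A) (v : Fin (2 * r) → A) :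
    (TE r i j ξ *ᵥ v) (negE r j) = v (negE r j) - ξ * v (negE r i) := by
  simp [TE_mulVec_apply, hij.symm]

theorem TE_mulVec_sub_mem {M : Ideal A} {ξ : A} (hξ : ξ ∈ M) (i j : Fin (2 * r))
    (v : Fin (2 * r) → A) (k : Fin (2 * r)) : (TE r i j ξ *ᵥ v) k - v k ∈ M := by
  rw [TE_mulVec_apply, add_sub_assoc, add_sub_cancel_left]
  refine M.sub_mem ?_ ?_ <;> split_ifs <;>
    first | exact M.mul_mem_right _ hξ | exact M.zero_mem

theorem one_mem_EOE (r n : ℕ) : 1 ∈ EOE r n A :=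
  ⟨[], n.zero_le, by simp, rfl⟩

theorem TE_mem_EOE_one (hij : i ≠ j) (hij' : i ≠ negE r j) (ξ : A) : TE r i j ξ ∈ EOE r 1 A :=
  ⟨[TE r i j ξ], le_rfl, by simpa using ⟨i, j, ξ, hij, hij', rfl⟩, by simp⟩

theorem mul_mem_EOE {m n : ℕ} {g h : Matrix (Fin (2 * r)) (Fin (2 * r)) A}
    (hg : g ∈ EOE r m A) (hh : h ∈ EOE r n A) : g * h ∈ EOE r (m + n) A := by
  obtain ⟨L, hLm, hL, rfl⟩ := hg
  obtain ⟨L', hLn, hL', rfl⟩ := hh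
  refine ⟨L ++ L', ?_, fun x hx ↦ (List.mem_append.1 hx).elim (hL x) (hL' x), by simp⟩
  rw [List.length_append]
  exact Nat.add_le_add hLm hLn

end Transvections

section Unimodularity

variable {A : Type*} [CommRing A]

/-- The column `v` is unimodular along the coordinates in `K` at each of the ideals in `S`: for
maximal ideals `M`, this says that the coordinates in `K` generate the unit ideal locally at `M`. -/
def IsUnimodularAt {ι : Type*} (S : Set (Ideal A)) (K : Set ι) (v : ι → A) : Prop :=
  ∀ M ∈ S, ∃ k ∈ K, v k ∉ M

theorem IsUnimodularAt.mono {ι : Type*} {S : Set (Ideal A)} {K L : Set ι} {v : ι → A}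
    (hv : IsUnimodularAt S L v) (hLK : L ⊆ K) : IsUnimodularAt S K v := fun M hM ↦
  let ⟨k, hk, hvk⟩ := hv M hM
  ⟨k, hLK hk, hvk⟩

theorem isUnimodularAt_univ {ι : Type*} {S : Set (Ideal A)} (hS : ∀ M ∈ S, M ≠ ⊤)
    {v : ι → A} (hv : Ideal.span (Set.range v) = ⊤) : IsUnimodularAt S Set.univ v := by
  intro M hM
  by_contra! hvM
  refine hS M hM (top_le_iff.1 (hv ▸ Ideal.span_le.2 ?_))
  rintro _ ⟨k, rfl⟩
  exact hvM k trivial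

variable {r : ℕ} {i j : Fin (2 * r)} {S : Set (Ideal A)} {K L F : Set (Fin (2 * r))}

theorem exists_TE_mulVec_notMem_of_sub_one_mem {M : Ideal A} {ξ : A} {v : Fin (2 * r) → A}
    (hij : i ≠ negE r j)
    (hLK : ∀ l ∈ L, l ∈ K ∨ (l = j ∧ i ∈ K) ∨ (l = negE r i ∧ negE r j ∈ K))
    (hξ : ξ - 1 ∈ M) (hvK : ∀ k ∈ K, v k ∈ M) (hvL : ∃ l ∈ L, v l ∉ M) :
    ∃ k ∈ K, (TE r i j ξ *ᵥ v) k ∉ M := by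
  have mem_of_mul_mem {x : A} (h : ξ * x ∈ M) : x ∈ M := by
    simpa [sub_mul] using M.sub_mem h (M.mul_mem_right x hξ)
  obtain ⟨l, hl, hvl⟩ := hvL
  obtain hlK | ⟨rfl, hiK⟩ | ⟨rfl, hjK⟩ := hLK l hl
  · exact absurd (hvK l hlK) hvl
  · refine ⟨i, hiK, fun h ↦ hvl (mem_of_mul_mem ?_)⟩
    rwa [TE_mulVec_apply_left hij, M.add_mem_iff_right (hvK i hiK)] at h
  · refine ⟨negE r j, hjK, fun h ↦ hvl (mem_of_mul_mem ?_)⟩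
    rwa [TE_mulVec_apply_negE_right hij, M.sub_mem_iff_right (hvK _ hjK)] at h

theorem exists_forall_TE_mulVec_notMem (hS : S.Finite) (hmax : ∀ M ∈ S, M.IsMaximal)
    (hij : i ≠ negE r j)
    (hLK : ∀ l ∈ L, l ∈ K ∨ (l = j ∧ i ∈ K) ∨ (l = negE r i ∧ negE r j ∈ K))
    {v : Fin (2 * r) → A} (hv : IsUnimodularAt S L v) :
    ∃ ξ₀ : A, ∀ M ∈ S, ∀ ξ, ξ - ξ₀ ∈ M → ∃ k ∈ K, (TE r i j ξ *ᵥ v) k ∉ M := by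
  obtain ⟨ξ₀, hξ₀⟩ := exists_forall_sub_one_mem_or_mem hS hmax fun M ↦ ∀ k ∈ K, v k ∈ M
  refine ⟨ξ₀, fun M hM ξ hξ ↦ ?_⟩
  by_cases hvK : ∀ k ∈ K, v k ∈ M
  · have hξ_one : ξ - 1 ∈ M := by simpa using M.add_mem hξ ((hξ₀ M hM).1 hvK)
    exact exists_TE_mulVec_notMem_of_sub_one_mem hij hLK hξ_one hvK (hv M hM)
  · have hξ_mem : ξ ∈ M := by simpa using M.add_mem hξ ((hξ₀ M hM).2 hvK)
    push Not at hvK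
    obtain ⟨k, hk, hvk⟩ := hvK
    exact ⟨k, hk, fun h ↦ hvk ((M.sub_mem_iff_right h).1 (TE_mulVec_sub_mem hξ_mem i j v k))⟩

/-- Unimodularity at `S` can be concentrated from the coordinates in `L` onto those in `K` by at
most `n` elementary transvections that do not move the coordinates in `F`. -/
def Concentrates (n : ℕ) (S : Set (Ideal A)) (F L K : Set (Fin (2 * r))) : Prop :=
  ∀ v : Fin (2 * r) → A, IsUnimodularAt S L v →
    ∃ E ∈ EOE r n A, (∀ k ∈ F, (E *ᵥ v) k = v k) ∧ IsUnimodularAt S K (E *ᵥ v)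

theorem Concentrates.of_subset (n : ℕ) (S : Set (Ideal A)) (F : Set (Fin (2 * r)))
    (hLK : L ⊆ K) : Concentrates n S F L K := fun v hv ↦
  ⟨1, one_mem_EOE r n, fun k _ ↦ by rw [one_mulVec], by rw [one_mulVec]; exact hv.mono hLK⟩

theorem Concentrates.trans {m n : ℕ} {K' : Set (Fin (2 * r))} (h : Concentrates m S F L K)
    (h' : Concentrates n S F K K') : Concentrates (n + m) S F L K' := by
  intro v hv
  obtain ⟨E, hE, hEF, hEK⟩ := h v hv
  obtain ⟨E', hE', hEF', hEK'⟩ := h' _ hEK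
  refine ⟨E' * E, mul_mem_EOE hE' hE, ?_, ?_⟩ <;> rw [← mulVec_mulVec]
  · exact fun k hk ↦ (hEF' k hk).trans (hEF k hk)
  · exact hEK'

theorem Concentrates.of_TE (hS : S.Finite) (hmax : ∀ M ∈ S, M.IsMaximal)
    (hij : i ≠ j) (hij' : i ≠ negE r j) (hiF : i ∉ F) (hjF : negE r j ∉ F)
    (hLK : ∀ l ∈ L, l ∈ K ∨ (l = j ∧ i ∈ K) ∨ (l = negE r i ∧ negE r j ∈ K)) :
    Concentrates 1 S F L K := by
  intro v hv
  obtain ⟨ξ, hξ⟩ := exists_forall_TE_mulVec_notMem hS hmax hij' hLK hv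
  refine ⟨TE r i j ξ, TE_mem_EOE_one hij hij' ξ, fun k hk ↦ ?_, fun M hM ↦ hξ M hM ξ (by simp)⟩
  exact TE_mulVec_apply_of_ne (ne_of_mem_of_not_mem hk hiF) (ne_of_mem_of_not_mem hk hjF) ξ v

end Unimodularity

section Elimination

variable {A : Type*} [CommRing A] {S : Set (Ideal A)} {r : ℕ}

/-- The positions `0` of `e_1` and `2 * r - 2` of `e_{-2}`, which hold the two monic entries. -/
def monicPositions (r : ℕ) : Set (Fin (2 * r)) := {k | k.val = 0 ∨ k.val = 2 * r - 2}

/-- The positions `1, …, c`, those of `e_2, …, e_{c+1}` as long as `c < r`, together with the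
position `2 * r - 2` of `e_{-2}`. -/
def initialPositions (r c : ℕ) : Set (Fin (2 * r)) :=
  {k | 0 < k.val ∧ (k.val ≤ c ∨ k.val = 2 * r - 2)}

theorem concentrates_initialPositions_sub_two (hS : S.Finite) (hmax : ∀ M ∈ S, M.IsMaximal)
    {c : ℕ} (hrc : r < c) (hc : c ≤ 2 * r - 3) :
    Concentrates 1 S (monicPositions r) (initialPositions r c) (initialPositions r (c - 2)) := by
  refine .of_TE (i := ⟨2 * r - 1 - c, by omega⟩) (j := ⟨c - 1, by omega⟩) hS hmax ?_ ?_ ?_ ?_ ?_ <;>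
    simp only [ne_eq, Fin.ext_iff, val_negE, monicPositions, initialPositions,
      Set.mem_ofPred_eq] <;>
    omega

theorem concentrates_initialPositions (hS : S.Finite) (hmax : ∀ M ∈ S, M.IsMaximal)
    (n : ℕ) {c : ℕ} (hc : c ≤ 2 * r - 3) (hcn : c ≤ r + 2 * n) :
    Concentrates n S (monicPositions r) (initialPositions r c) (initialPositions r r) := by
  induction n generalizing c with
  | zero => exact .of_subset 0 S _ fun k hk ↦ ⟨hk.1, hk.2.imp_left fun h ↦ h.trans hcn⟩
  | succ n ih =>
    obtain hcr | hrc := le_or_gt c r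
    · exact .of_subset _ S _ fun k hk ↦ ⟨hk.1, hk.2.imp_left fun h ↦ h.trans hcr⟩
    · exact (concentrates_initialPositions_sub_two hS hmax hrc hc).trans
        (ih (by omega) (by omega))

theorem concentrates_initialPositions_self (hr : 3 ≤ r) (hS : S.Finite)
    (hmax : ∀ M ∈ S, M.IsMaximal) :
    Concentrates 2 S (monicPositions r) (initialPositions r r)
      {k | 0 < k.val ∧ k.val < r - 1} := by
  have discard_sub_one_and_last : Concentrates 1 S (monicPositions r) (initialPositions r r)
      {k | 0 < k.val ∧ (k.val < r - 1 ∨ k.val = r)} := by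
    refine .of_TE (i := ⟨1, by omega⟩) (j := ⟨r - 1, by omega⟩) hS hmax ?_ ?_ ?_ ?_ ?_ <;>
      simp only [ne_eq, Fin.ext_iff, val_negE, monicPositions, initialPositions,
        Set.mem_ofPred_eq] <;>
      omega
  refine discard_sub_one_and_last.trans (n := 1)
    (.of_TE (i := ⟨1, by omega⟩) (j := ⟨r, by omega⟩) hS hmax ?_ ?_ ?_ ?_ ?_) <;>
    simp only [ne_eq, Fin.ext_iff, val_negE, monicPositions, Set.mem_ofPred_eq] <;>
    omega

theorem concentrates_initialPositions_two_mul_sub_three (hr : 3 ≤ r) (hS : S.Finite)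
    (hmax : ∀ M ∈ S, M.IsMaximal) :
    Concentrates (2 + (r / 2 - 1)) S (monicPositions r) (initialPositions r (2 * r - 3))
      {k | 0 < k.val ∧ k.val < r - 1} :=
  (concentrates_initialPositions hS hmax (r / 2 - 1) le_rfl (by omega)).trans
    (concentrates_initialPositions_self hr hS hmax)

end Elimination

section MonicStep

open Polynomial

variable {B : Type*} [CommRing B] {r : ℕ}

theorem exists_TE_monic_isUnimodularAt {T : Set (Ideal B)} (hT : T.Finite)
    {i j : Fin (2 * r)} (hij : i ≠ j) (hij' : i ≠ negE r j) {b : Fin (2 * r) → B[X]}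
    (hb : Ideal.span (Set.range b) = ⊤) (hbj : (b j).Monic) :
    ∃ ξ : B[X], ((TE r i j ξ *ᵥ b) i).Monic ∧ (TE r i j ξ *ᵥ b) j = b j ∧
      IsUnimodularAt (maximalsOver T (Ideal.span {(TE r i j ξ *ᵥ b) i})) {i, negE r i}ᶜ
        (TE r i j ξ *ᵥ b) := by
  have := hbj.finite_quotient
  have hji : j ≠ negE r i := fun h ↦ hij' (h ▸ (negE_involutive r i).symm)
  have hnegE : negE r j ≠ negE r i := (negE_involutive r).injective.ne hij.symm
  have hfix (ξ : B[X]) : (TE r i j ξ *ᵥ b) j = b j :=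
    TE_mulVec_apply_of_ne hij.symm (ne_negE_self j) ξ b
  have hcover : ∀ l ∈ Set.univ, l ≠ negE r i ∨ (l = j ∧ i ≠ negE r i) ∨
      (l = negE r i ∧ negE r j ≠ negE r i) := fun l _ ↦
    (ne_or_eq l (negE r i)).imp_right fun h ↦ .inr ⟨h, hnegE⟩
  obtain ⟨ξ₀, hξ₀⟩ := exists_forall_TE_mulVec_notMem (K := {negE r i}ᶜ)
    (finite_maximalsOver hT (Ideal.span {b j})) (fun M hM ↦ hM.1) hij' hcover
    (isUnimodularAt_univ (fun M hM ↦ hM.1.ne_top) hb)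
  -- Adding a multiple of `b_j` to `ξ₀` does not affect it modulo the ideals containing `b_j`.
  obtain ⟨ξ, hξ, hmonic⟩ : ∃ ξ, (∀ M : Ideal B[X], b j ∈ M → ξ - ξ₀ ∈ M) ∧
      (b i + ξ * b j).Monic := by
    obtain ⟨N, hN⟩ := exists_monic_add_mul_X_pow (b i + ξ₀ * b j) (hbj.mul hbj)
    refine ⟨ξ₀ + b j * X ^ N, fun M hM ↦ by simpa using M.mul_mem_right (X ^ N) hM, ?_⟩
    convert hN using 1
    ring
  refine ⟨ξ, by rwa [TE_mulVec_apply_left hij'], hfix ξ, fun M ⟨hM, hiM, hMT⟩ ↦ ?_⟩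
  rw [Ideal.span_singleton_le_iff_mem] at hiM
  obtain ⟨k, hk, hvk⟩ : ∃ k ∈ ({negE r i}ᶜ : Set (Fin (2 * r))), (TE r i j ξ *ᵥ b) k ∉ M := by
    by_cases hjM : b j ∈ M
    · exact hξ₀ M ⟨hM, (Ideal.span_singleton_le_iff_mem M).2 hjM, hMT⟩ ξ (hξ M hjM)
    · exact ⟨j, hji, by rwa [hfix]⟩
  exact ⟨k, not_or.2 ⟨by rintro rfl; exact hvk hiM, hk⟩, hvk⟩

theorem exists_mem_EOE_monic_isUnimodularAt {T : Set (Ideal B)} (hT : T.Finite) (hr : 3 ≤ r)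
    {i j : Fin (2 * r)} (hi : i.val = 0) (hj : j.val = 2 * r - 2) {b : Fin (2 * r) → B[X]}
    (hb : Ideal.span (Set.range b) = ⊤) (hbj : (b j).Monic) :
    ∃ E ∈ EOE r ((r - 1 + 1) / 2 + 2) B[X], ((E *ᵥ b) i).Monic ∧ (E *ᵥ b) j = b j ∧
      IsUnimodularAt (maximalsOver T (Ideal.span {(E *ᵥ b) i}))
        {k | 0 < k.val ∧ k.val < r - 1} (E *ᵥ b) := by
  have hij : i ≠ j := by
    rw [ne_eq, Fin.ext_iff]
    omega
  have hij' : i ≠ negE r j := by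
    rw [ne_eq, Fin.ext_iff, val_negE]
    omega
  have hcompl : {i, negE r i}ᶜ ⊆ initialPositions r (2 * r - 3) := by
    intro k
    simp only [initialPositions, Set.mem_compl_iff, Set.mem_insert_iff,
      Set.mem_singleton_iff, Set.mem_ofPred_eq, Fin.ext_iff, val_negE]
    omega
  obtain ⟨ξ, hfirst, hfix, hv⟩ := exists_TE_monic_isUnimodularAt hT hij hij' hb hbj
  have := hfirst.finite_quotient
  obtain ⟨E, hE, hEfix, hEv⟩ := concentrates_initialPositions_two_mul_sub_three hr
    (finite_maximalsOver hT _) (fun M hM ↦ hM.1) _ (hv.mono hcompl)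
  have hcount : (r - 1 + 1) / 2 + 2 = 2 + (r / 2 - 1) + 1 := by omega
  refine ⟨E * TE r i j ξ, hcount ▸ mul_mem_EOE hE (TE_mem_EOE_one hij hij' ξ), ?_⟩
  rw [← mulVec_mulVec, hEfix i (.inl hi)]
  exact ⟨hfirst, (hEfix j (.inr hj)).trans hfix, hEv⟩

end MonicStep

theorem even_prepare_shift_general {B ι : Type*} [CommRing B] [Finite ι] (P : ι → Ideal B)
    (hP : ∀ i, P i ≠ ⊤) {r : ℕ} (hr : 3 ≤ r) {j : Fin (2 * r)} (hj : j.val = 2 * r - 2)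
    (b : Fin (2 * r) → Polynomial B) (hb : Ideal.span (Set.range b) = ⊤) (hbj : (b j).Monic) :
    ∃ E ∈ EOE r ((r - 1 + 1) / 2 + 2) (Polynomial B),
      (E.mulVec b j).Monic ∧
      ∃ x : B,
        Polynomial.C x ∈
          Ideal.span {p : Polynomial B | ∃ i : Fin (2 * r), i.val < r - 1 ∧ p = E.mulVec b i} ∧
        ∀ i, x ∉ P i := by
  choose Q hQ hPQ using fun i ↦ Ideal.exists_le_maximal (P i) (hP i)
  obtain ⟨E, hE, hfirst, hfix, hEb⟩ := exists_mem_EOE_monic_isUnimodularAt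
    (Set.finite_range Q) hr (i := ⟨0, by omega⟩) rfl hj hb hbj
  refine ⟨E, hE, hfix ▸ hbj, ?_⟩
  set J := Ideal.span {p : Polynomial B | ∃ i : Fin (2 * r), i.val < r - 1 ∧ p = (E *ᵥ b) i}
  have hmemJ (k : Fin (2 * r)) (hk : k.val < r - 1) : (E *ᵥ b) k ∈ J :=
    Ideal.subset_span ⟨k, hk, rfl⟩
  have hJ : ∀ M ∈ maximalsOver (Set.range Q) (Ideal.span {(E *ᵥ b) ⟨0, by omega⟩}), ¬ J ≤ M := by
    intro M hM hJM
    obtain ⟨k, hk, hkM⟩ := hEb M hM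
    exact hkM (hJM (hmemJ k hk.2))
  have := hfirst.finite_quotient
  obtain ⟨x, hxJ, hxQ⟩ := exists_algebraMap_mem_forall_notMem (Set.finite_range Q)
    (Set.forall_mem_range.2 hQ)
    ((Ideal.span_singleton_le_iff_mem J).2 (hmemJ _ (show 0 < r - 1 by omega))) hJ
  rw [Polynomial.algebraMap_eq] at hxJ
  exact ⟨x, hxJ, fun i hi ↦ hxQ _ ⟨i, rfl⟩ (hPQ i hi)⟩

/-- Preparation step: given distinct maximal ideals `P_1,…,P_m` of `B` and
`b ∈ IUm_{2r}(B[y])` with `b_{−2}` monic, at most `⌈(r−1)/2⌉ + 2` elementary orthogonal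
transvections produce a column `b⁽¹⁾` with `b⁽¹⁾_{−2}` monic and
`(⟨b⁽¹⁾_1,…,b⁽¹⁾_{r−1}⟩ ∩ B) ⊄ P_1 ∪ … ∪ P_m`. -/
theorem even_prepare_shift
    (B : Type*) [CommRing B] (m : ℕ) (P : Fin m → Ideal B)
    (hP : ∀ i, (P i).IsMaximal) (hPdist : ∀ i j, i ≠ j → P i ≠ P j)
    (r : ℕ) (hr : 3 ≤ r)
    (b : Fin (2 * r) → Polynomial B) (hb : b ∈ IUmE r (Polynomial B))
    (hmonic : (b ⟨2 * r - 2, by omega⟩).Monic) :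
    ∃ E ∈ EOE r ((r - 1 + 1) / 2 + 2) (Polynomial B),
      (E.mulVec b ⟨2 * r - 2, by omega⟩).Monic ∧
      ∃ x : B,
        Polynomial.C x ∈
          Ideal.span {p : Polynomial B | ∃ i : Fin (2 * r), i.val < r - 1 ∧ p = E.mulVec b i} ∧
        ∀ i, x ∉ P i := by
  exact even_prepare_shift_general P (fun i ↦ (hP i).ne_top) hr rfl b hb.1 hmonic
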